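/- Let D_1 and D_2 be two vertex-disjoint digraphs with Hamiltonian cycles of lengths n and m respectively, let d = gcd(n, m), and let D ∈ D_1 ⊕ D_2 be strong. Then for each integer l ∈ {n + i·d : 1 ≤ i ≤ m/d}, D contains a directed cycle of length l. -/

import Mathlib

/-!
Index the two Hamiltonian cycles by the integers, `X : ℤ → α` with period `n` and `Y : ℤ → α` with
period `m`, and let `F i j` say that `X i → Y j`; otherwise `Y j → X i`. Let `k = i * d`, so
`d ∣ k` and `0 < k ≤ m`, and suppose that there is no cycle of length `n + k`.

If `X i → Y j`, go around from `X (i + 1 + s)` to `X i`, then from `Y j` to `Y (j + k + s - 1)`.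
This path has `n + k` vertices, so it does not close up, and `X (i + 1 + s) → Y (j + k + s - 1)`
(`shift_of_no_cycle`). Hence the set of all `(i, j)` with `F i j` is invariant under the
translations `(1 + s, k + s - 1)`. By periodicity the translations preserving it form a
subgroup `H` of `ℤ × ℤ` (`shiftGroup`) containing `(n, 0)` and `(0, m)`.

* If `k = m`, then `s = 0` gives `(1, -1) ∈ H`, hence `(0, n) ∈ H` and `(0, d) ∈ H`.
* If `k < m`, then `s = 0, 1` give `(1, k - 1), (2, k) ∈ H`, hence `(1, 1)`, `(0, n)`, `(0, d)`,
  `(0, k)`, `(0, 2)` and `(1, -1)` lie in `H`, and so does `(0, gcd 2 d)`.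

In both cases `(1, -1), (0, e) ∈ H` for some `e ∣ k`, so that `F i j` depends only on `i + j`
modulo `e`. As `D` is strong, `F` is neither always true nor always false, so going around
`ℤ / e` there is a change from true to false and one from false to true. These provide the four
arcs of a cycle that traverses all of `X` and `k` consecutive vertices of `Y`, the latter in two
pieces separated by a single vertex of `X` (`hasCycle_of_antidiagonal`).
-/


/-- A digraph: a finite vertex set together with an irreflexive arc relation
whose arcs join vertices of the digraph. -/
structure FinDigraph (α : Type) [DecidableEq α] where
  verts : Finset α
  Arc : α → α → Prop
  arc_mem_left : ∀ {u v : α}, Arc u v → u ∈ verts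
  arc_mem_right : ∀ {u v : α}, Arc u v → v ∈ verts
  arc_irrefl : ∀ v : α, ¬ Arc v v

namespace FinDigraph

variable {α : Type} [DecidableEq α]

/-- `c` lists, in cyclic order, the vertices of a directed cycle of length `l` in `D`. -/
def CycleOn (D : FinDigraph α) {l : ℕ} (c : ZMod l → α) : Prop :=
  Function.Injective c ∧ ∀ i : ZMod l, D.Arc (c i) (c (i + 1))

/-- `D` contains a directed cycle of length `l`. -/
def HasCycle (D : FinDigraph α) (l : ℕ) : Prop :=
  ∃ c : ZMod l → α, D.CycleOn c

/-- `D` contains a directed cycle of length `l` passing through `v`. -/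
def HasCycleThrough (D : FinDigraph α) (l : ℕ) (v : α) : Prop :=
  ∃ c : ZMod l → α, D.CycleOn c ∧ ∃ i : ZMod l, c i = v

/-- `c` is a Hamiltonian cycle of `D`. -/
def IsHamCycle (D : FinDigraph α) {l : ℕ} (c : ZMod l → α) : Prop :=
  D.CycleOn c ∧ ∀ v ∈ D.verts, ∃ i : ZMod l, c i = v

/-- `D` contains a directed cycle through all of its vertices. -/
def Hamiltonian (D : FinDigraph α) : Prop :=
  ∃ c : ZMod D.verts.card → α, D.IsHamCycle c

/-- For every ordered pair of vertices `u`, `v` there is a directed path from `u` to `v`. -/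
def Strong (D : FinDigraph α) : Prop :=
  ∀ u ∈ D.verts, ∀ v ∈ D.verts, Relation.ReflTransGen D.Arc u v

/-- `D` (of order at least 3) has directed cycles of every length from 3 to its order. -/
def Pancyclic (D : FinDigraph α) : Prop :=
  3 ≤ D.verts.card ∧ ∀ l : ℕ, 3 ≤ l → l ≤ D.verts.card → D.HasCycle l

/-- Every vertex of `D` lies on directed cycles of every length from 3 to the order of `D`. -/
def VertexPancyclic (D : FinDigraph α) : Prop :=
  3 ≤ D.verts.card ∧
    ∀ v ∈ D.verts, ∀ l : ℕ, 3 ≤ l → l ≤ D.verts.card → D.HasCycleThrough l v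

/-- `D` is a generalized sum of the two vertex-disjoint digraphs `D1` and `D2`:
its vertex set is the union of theirs, it induces each of them, and between any two
vertices of different summands there is exactly one arc. -/
def GenSum2 (D1 D2 D : FinDigraph α) : Prop :=
  D.verts = D1.verts ∪ D2.verts ∧
  (∀ u v : α, u ∈ D1.verts → v ∈ D1.verts → (D.Arc u v ↔ D1.Arc u v)) ∧
  (∀ u v : α, u ∈ D2.verts → v ∈ D2.verts → (D.Arc u v ↔ D2.Arc u v)) ∧
  (∀ u v : α, u ∈ D1.verts → v ∈ D2.verts → Xor' (D.Arc u v) (D.Arc v u))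

/-- `D` is a generalized sum of the pairwise vertex-disjoint digraphs `Ds i`. -/
def GenSum {k : ℕ} (Ds : Fin k → FinDigraph α) (D : FinDigraph α) : Prop :=
  D.verts = Finset.univ.biUnion (fun i => (Ds i).verts) ∧
  (∀ i : Fin k, ∀ u v : α, u ∈ (Ds i).verts → v ∈ (Ds i).verts →
    (D.Arc u v ↔ (Ds i).Arc u v)) ∧
  (∀ i j : Fin k, i ≠ j → ∀ u v : α, u ∈ (Ds i).verts → v ∈ (Ds j).verts →
    Xor' (D.Arc u v) (D.Arc v u))

end FinDigraph

open FinDigraph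

/-! ### Cycles given by functions on the natural numbers -/

lemma hasCycle_of_nat {α : Type} [DecidableEq α] (D : FinDigraph α) (l : ℕ) (hl : 2 ≤ l)
    (c : ℕ → α) (hinj : ∀ s t, s < l → t < l → c s = c t → s = t)
    (harc : ∀ t, t + 1 < l → D.Arc (c t) (c (t + 1))) (hlast : D.Arc (c (l - 1)) (c 0)) :
    D.HasCycle l := by
  have : NeZero l := ⟨by omega⟩
  have : Fact (1 < l) := ⟨by omega⟩
  refine ⟨fun i => c i.val, ?_, ?_⟩
  · intro a b hab
    exact ZMod.val_injective l (hinj _ _ (ZMod.val_lt a) (ZMod.val_lt b) hab)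
  · intro i
    have hi := ZMod.val_lt i
    have h1 : (i + 1).val = (i.val + 1) % l := by
      rw [ZMod.val_add, ZMod.val_one]
    show D.Arc (c i.val) (c (i + 1).val)
    rw [h1]
    by_cases h : i.val + 1 < l
    · rw [Nat.mod_eq_of_lt h]
      exact harc _ h
    · have h2 : i.val = l - 1 := by omega
      have h3 : i.val + 1 = l := by omega
      rw [h3, Nat.mod_self, h2]
      exact hlast

/-! ### Two disjoint cycles indexed by the integers -/

/-- Two vertex-disjoint directed cycles of `D` of lengths `n` and `m`, at least two each, indexed
periodically by the integers, such that any two vertices on different cycles are adjacent. -/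
structure CyclePair {α : Type} [DecidableEq α] (D : FinDigraph α) (n m : ℕ) (X Y : ℤ → α) :
    Prop where
  hn : 2 ≤ n
  hm : 2 ≤ m
  perX : ∀ a : ℤ, X (a + n) = X a
  perY : ∀ a : ℤ, Y (a + m) = Y a
  injX : ∀ a b : ℤ, a - b < n → b - a < n → X a = X b → a = b
  injY : ∀ a b : ℤ, a - b < m → b - a < m → Y a = Y b → a = b
  ne : ∀ a b : ℤ, X a ≠ Y b
  arcX : ∀ a : ℤ, D.Arc (X a) (X (a + 1))
  arcY : ∀ a : ℤ, D.Arc (Y a) (Y (a + 1))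
  back : ∀ a b : ℤ, ¬ D.Arc (X a) (Y b) → D.Arc (Y b) (X a)

namespace CyclePair

variable {α : Type} [DecidableEq α] {D : FinDigraph α} {n m : ℕ} {X Y : ℤ → α}

lemma shift_of_no_cycle (P : CyclePair D n m X Y) {k : ℕ} (hk : 0 < k)
    (hno : ¬ D.HasCycle (n + k)) (s : ℕ) (hsn : s < n) (hsm : k + s ≤ m) (i j : ℤ)
    (hij : D.Arc (X i) (Y j)) : D.Arc (X (i + (1 + s))) (Y (j + (k + s - 1))) := by
  by_contra hcon
  have hb := P.back _ _ hcon
  apply hno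
  have hn := P.hn
  refine hasCycle_of_nat D (n + k) (by omega)
    (fun t => if t < n - s then X (i + 1 + s + t) else Y (j + (t - (n - s : ℕ)))) ?_ ?_ ?_
  · intro a b ha hb' hab
    split_ifs at hab with h1 h2 h2
    · have := P.injX _ _ (by omega) (by omega) hab
      omega
    · exact absurd hab (P.ne _ _)
    · exact absurd hab.symm (P.ne _ _)
    · have := P.injY _ _ (by omega) (by omega) hab
      omega
  · intro t ht
    by_cases h1 : t + 1 < n - s
    · rw [if_pos (by omega), if_pos h1]
      have := P.arcX (i + 1 + s + t)
      convert this using 2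
      push_cast; ring
    · by_cases h2 : t < n - s
      · rw [if_pos h2, if_neg h1]
        have e1 : i + 1 + s + t = i + n := by omega
        have e2 : j + (((t + 1 : ℕ) : ℤ) - (n - s : ℕ)) = j := by omega
        rw [e1, e2, P.perX]
        exact hij
      · rw [if_neg h2, if_neg h1]
        have := P.arcY (j + (t - (n - s : ℕ)))
        convert this using 2
        push_cast; ring
  · rw [if_neg (by omega), if_pos (by omega)]
    convert hb using 2
    · omega
    · push_cast; ring

lemma per_mul (P : CyclePair D n m X Y) (N : ℕ) (a b : ℤ) :
    X (a + N * n) = X a ∧ Y (b + N * m) = Y b := by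
  induction N with
  | zero => simp
  | succ N ih =>
    have e1 : a + ((N + 1 : ℕ) : ℤ) * n = a + N * n + n := by push_cast; ring
    have e2 : b + ((N + 1 : ℕ) : ℤ) * m = b + N * m + m := by push_cast; ring
    rw [e1, e2, P.perX, P.perY]
    exact ih

/-- The translations of `ℤ × ℤ` mapping the set of all `(i, j)` with `X i → Y j` onto itself. -/
def shiftGroup (D : FinDigraph α) (X Y : ℤ → α) : AddSubgroup (ℤ × ℤ) where
  carrier := {p | ∀ i j, D.Arc (X i) (Y j) ↔ D.Arc (X (i + p.1)) (Y (j + p.2))}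
  zero_mem' := by simp
  add_mem' := by
    intro p q hp hq i j
    rw [hp i j, hq (i + p.1) (j + p.2)]
    simp only [Prod.fst_add, Prod.snd_add, add_assoc]
  neg_mem' := by
    intro p hp i j
    have := hp (i + -p.1) (j + -p.2)
    simp only [neg_add_cancel_right] at this
    exact this.symm

/-- A translation mapping the set of pairs `(i, j)` with `X i → Y j` into itself maps it onto
itself, because a multiple of it is a period. -/
lemma mem_shiftGroup (P : CyclePair D n m X Y) (p : ℤ × ℤ)
    (hp : ∀ i j, D.Arc (X i) (Y j) → D.Arc (X (i + p.1)) (Y (j + p.2))) :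
    p ∈ shiftGroup D X Y := by
  intro i j
  refine ⟨hp i j, fun h => ?_⟩
  have key : ∀ N : ℕ, D.Arc (X (i + p.1 + N * p.1)) (Y (j + p.2 + N * p.2)) := by
    intro N
    induction N with
    | zero => simpa using h
    | succ N ih =>
      have := hp _ _ ih
      convert this using 2 <;> (push_cast; ring)
  have hn := P.hn
  have hm := P.hm
  have hpos : 1 ≤ n * m := Nat.mul_pos (by omega) (by omega)
  have h1 := key (n * m - 1)
  have perX' : ∀ z : ℤ, X (i + z * n) = X i := by
    intro z
    obtain ⟨N, rfl | rfl⟩ := z.eq_nat_or_neg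
    · exact (P.per_mul N i j).1
    · have := (P.per_mul N (i + -(N : ℤ) * n) j).1
      rw [← this]; congr 1; ring
  have perY' : ∀ z : ℤ, Y (j + z * m) = Y j := by
    intro z
    obtain ⟨N, rfl | rfl⟩ := z.eq_nat_or_neg
    · exact (P.per_mul N i j).2
    · have := (P.per_mul N i (j + -(N : ℤ) * m)).2
      rw [← this]; congr 1; ring
  have e1 : i + p.1 + ((n * m - 1 : ℕ) : ℤ) * p.1 = i + (m * p.1) * n := by
    rw [Nat.cast_sub hpos]; push_cast; ring
  have e2 : j + p.2 + ((n * m - 1 : ℕ) : ℤ) * p.2 = j + (n * p.2) * m := by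
    rw [Nat.cast_sub hpos]; push_cast; ring
  rw [e1, e2, perX', perY'] at h1
  exact h1

/-- By the two translations, `X i → Y j` depends only on `i + j` modulo `e`. Since it is neither
always nor never true, there is `a` such that it holds for `i + j = a` but not for `i + j = a + 1`;
let `r` be least such that it holds again for `i + j = a + 2 + r`. The cycle visits `X 2, …, X n`,
then `Y a, …, Y (a + r)`, then `X 1`, and finally
`Y (a + r + 1), …, Y (a + k - 1)`. -/
lemma hasCycle_of_antidiagonal (P : CyclePair D n m X Y) {k e : ℕ} (hk : 0 < k) (hkm : k ≤ m)
    (hek : e ∣ k) (h1 : ((1, -1) : ℤ × ℤ) ∈ shiftGroup D X Y)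
    (he : ((0, (e : ℤ)) : ℤ × ℤ) ∈ shiftGroup D X Y)
    (hex : ∃ i j, D.Arc (X i) (Y j)) (hnex : ∃ i j, ¬ D.Arc (X i) (Y j)) :
    D.HasCycle (n + k) := by
  have hn := P.hn
  have hek' : e ≤ k := Nat.le_of_dvd hk hek
  have he0 : 0 < e := Nat.pos_of_dvd_of_pos hek hk
  set G : ℤ → Prop := fun t => D.Arc (X 0) (Y t) with hG
  have hFG : ∀ i j, D.Arc (X i) (Y j) ↔ G (i + j) := by
    intro i j
    have := (shiftGroup D X Y).zsmul_mem h1 i 0 (i + j)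
    simp only [hG]
    rw [this]
    simp
  have hGe : ∀ (z t : ℤ), G t ↔ G (t + z * e) := by
    intro z t
    have := (shiftGroup D X Y).zsmul_mem he z 0 t
    simp only [hG]
    rw [this]
    simp
  obtain ⟨a, ha, ha1⟩ : ∃ a, G a ∧ ¬ G (a + 1) := by
    by_contra hcon
    push Not at hcon
    obtain ⟨i, j, hij⟩ := hex
    obtain ⟨i', j', hij'⟩ := hnex
    rw [hFG] at hij hij'
    have up : ∀ N : ℕ, G (i + j + N) := by
      intro N
      induction N with
      | zero => simpa using hij
      | succ N ih =>
        have := hcon _ ih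
        convert this using 1
        push_cast; ring
    apply hij'
    rw [hGe (|i + j - (i' + j')|) (i' + j')]
    have hle : i + j - (i' + j') ≤ |i + j - (i' + j')| * e := by
      have h2 := le_abs_self (i + j - (i' + j'))
      have h3 := abs_nonneg (i + j - (i' + j'))
      have h4 : (1 : ℤ) ≤ e := by exact_mod_cast he0
      nlinarith
    have := up (i' + j' + |i + j - (i' + j')| * e - (i + j)).toNat
    rw [Int.toNat_of_nonneg (by linarith)] at this
    convert this using 1
    ring
  have he2 : 2 ≤ e := by
    by_contra hcon
    have e1 : e = 1 := by omega
    apply ha1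
    have := (hGe 1 a).1 ha
    simpa [e1] using this
  have hexr : ∃ r : ℕ, G (a + 2 + r) := by
    refine ⟨e - 2, ?_⟩
    have := (hGe 1 a).1 ha
    convert this using 1
    omega
  classical
  obtain ⟨r, hr, hrmin, hre⟩ : ∃ r : ℕ, G (a + 2 + r) ∧ ¬ G (a + 1 + r) ∧ r + 2 ≤ e := by
    refine ⟨Nat.find hexr, Nat.find_spec hexr, ?_, ?_⟩
    · rcases Nat.eq_zero_or_pos (Nat.find hexr) with h | h
      · rw [h]; simpa using ha1
      · have := Nat.find_min hexr (m := Nat.find hexr - 1) (by omega)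
        convert this using 2
        omega
    · have : Nat.find hexr ≤ e - 2 := by
        apply Nat.find_min'
        have := (hGe 1 a).1 ha
        convert this using 1
        omega
      omega
  obtain ⟨q, rfl⟩ := hek
  -- The four arcs joining the two cycles.
  have A1 : D.Arc (X n) (Y a) := by
    have := P.perX 0
    rw [zero_add] at this
    rw [this]; exact ha
  have A2 : D.Arc (Y (a + r)) (X 1) := by
    apply P.back
    rw [hFG]
    convert hrmin using 2
    ring
  have A3 : D.Arc (X 1) (Y (a + r + 1)) := by
    rw [hFG]
    convert hr using 1
    ring
  have A4 : D.Arc (Y (a + (e * q : ℕ) - 1)) (X 2) := by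
    apply P.back
    rw [hFG]
    intro h
    apply ha1
    rw [hGe q (a + 1)]
    convert h using 1
    push_cast; ring
  generalize hkk : e * q = k at *
  refine hasCycle_of_nat D (n + k) (by omega)
    (fun t => if t < n - 1 then X (2 + t) else if t < n + r then Y (a + (t + 1 - n)) else
      if t = n + r then X 1 else Y (a + (t - n))) ?_ ?_ ?_
  · intro s t hs ht hst
    split_ifs at hst <;>
    first
    | exact absurd hst (P.ne _ _)
    | exact absurd hst.symm (P.ne _ _)
    | (have := P.injX _ _ (by omega) (by omega) hst; omega)
    | (have := P.injY _ _ (by omega) (by omega) hst; omega)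
  · intro t ht
    rcases lt_trichotomy (t + 1) (n - 1) with h | h | h
    · rw [if_pos (by omega), if_pos h]
      convert P.arcX (2 + t) using 2
      push_cast; ring
    · rw [if_pos (by omega), if_neg (by omega), if_pos (by omega)]
      convert A1 using 2 <;> omega
    · rw [if_neg (by omega), if_neg (show ¬ t + 1 < n - 1 by omega)]
      rcases lt_trichotomy (t + 1) (n + r) with h' | h' | h'
      · rw [if_pos (by omega), if_pos h']
        convert P.arcY (a + (t + 1 - n)) using 2
        push_cast; ring
      · rw [if_pos (by omega), if_neg (by omega), if_pos h']
        convert A2 using 2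
        omega
      · rw [if_neg (by omega), if_neg (show ¬ t + 1 < n + r by omega),
          if_neg (show ¬ t + 1 = n + r by omega)]
        by_cases h2 : t = n + r
        · rw [if_pos h2]
          convert A3 using 2
          omega
        · rw [if_neg h2]
          convert P.arcY (a + (t - n)) using 2
          push_cast; ring
  · rw [if_neg (by omega), if_neg (by omega), if_neg (by omega)]
    rw [if_pos (by omega)]
    convert A4 using 2 <;> push_cast <;> omega

lemma gcd_mem (H : AddSubgroup (ℤ × ℤ)) {a b : ℕ} (ha : ((0, (a : ℤ)) : ℤ × ℤ) ∈ H)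
    (hb : ((0, (b : ℤ)) : ℤ × ℤ) ∈ H) : ((0, (Nat.gcd a b : ℤ)) : ℤ × ℤ) ∈ H := by
  have := H.add_mem (H.zsmul_mem ha (Nat.gcdA a b)) (H.zsmul_mem hb (Nat.gcdB a b))
  convert this using 1
  rw [Nat.gcd_eq_gcd_ab]
  ext
  · simp
  · simp; ring

lemma hasCycle (P : CyclePair D n m X Y) {k : ℕ} (hk : 0 < k) (hkm : k ≤ m)
    (hdk : Nat.gcd n m ∣ k)
    (hex : ∃ i j, D.Arc (X i) (Y j)) (hnex : ∃ i j, ¬ D.Arc (X i) (Y j)) :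
    D.HasCycle (n + k) := by
  by_contra hno
  have hn := P.hn
  set H := shiftGroup D X Y with hH
  have hn0 : ((n : ℤ), (0 : ℤ)) ∈ H :=
    P.mem_shiftGroup _ (fun i j h => by simpa [P.perX] using h)
  have h0m : ((0 : ℤ), (m : ℤ)) ∈ H :=
    P.mem_shiftGroup _ (fun i j h => by simpa [P.perY] using h)
  have hs0 : ((1 : ℤ), (k : ℤ) - 1) ∈ H := P.mem_shiftGroup _ (fun i j h => by
    simpa using P.shift_of_no_cycle hk hno 0 (by omega) (by omega) i j h)
  rcases hkm.eq_or_lt with rfl | hlt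
  · have h1 : ((1 : ℤ), (-1 : ℤ)) ∈ H := by
      simpa using H.sub_mem hs0 h0m
    have h0n : ((0 : ℤ), (n : ℤ)) ∈ H := by
      simpa using H.sub_mem hn0 (H.zsmul_mem h1 n)
    exact hno (P.hasCycle_of_antidiagonal hk le_rfl hdk h1 (gcd_mem H h0n h0m) hex hnex)
  · have hs1 : ((2 : ℤ), (k : ℤ)) ∈ H := P.mem_shiftGroup _ (fun i j h => by
      simpa using P.shift_of_no_cycle hk hno 1 (by omega) (by omega) i j h)
    have h11 : ((1 : ℤ), (1 : ℤ)) ∈ H := by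
      simpa using H.sub_mem hs1 hs0
    have h0n : ((0 : ℤ), (n : ℤ)) ∈ H := by
      simpa using H.sub_mem (H.zsmul_mem h11 n) hn0
    have h0d := gcd_mem H h0n h0m
    have h0k : ((0 : ℤ), (k : ℤ)) ∈ H := by
      obtain ⟨q, hq⟩ := hdk
      have := H.zsmul_mem h0d q
      convert this using 1
      ext
      · simp
      · rw [hq]; simp; ring
    have h02 : ((0 : ℤ), ((2 : ℕ) : ℤ)) ∈ H := by
      have := H.add_mem (H.sub_mem h0k hs1) (H.zsmul_mem h11 2)
      simpa using this
    have h1 : ((1 : ℤ), (-1 : ℤ)) ∈ H := by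
      simpa using H.sub_mem h11 h02
    exact hno (P.hasCycle_of_antidiagonal hk hkm ((Nat.gcd_dvd_right _ _).trans hdk) h1
      (gcd_mem H h02 h0d) hex hnex)

end CyclePair

/-! ### From the generalized sum to a pair of cycles -/

lemma IsHamCycle.mem {α : Type} [DecidableEq α] {D : FinDigraph α} {l : ℕ} {c : ZMod l → α}
    (h : D.IsHamCycle c) (i : ZMod l) : c i ∈ D.verts :=
  D.arc_mem_left (h.1.2 i)

lemma IsHamCycle.two_le {α : Type} [DecidableEq α] {D : FinDigraph α} {l : ℕ} {c : ZMod l → α}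
    (h : D.IsHamCycle c) : 2 ≤ l := by
  by_contra hcon
  have : l = 0 ∨ l = 1 := by omega
  -- `ZMod 0` is infinite, which is excluded by finiteness; a cycle of length one is a loop.
  rcases this with rfl | rfl
  · have hinj : Function.Injective (fun i : ZMod 0 => (⟨c i, IsHamCycle.mem h i⟩ : D.verts)) := by
      intro a b hab
      exact h.1.1 (by simpa using hab)
    have : Finite (ZMod 0) := Finite.of_injective _ hinj
    have : Infinite (ZMod 0) := inferInstanceAs (Infinite ℤ)
    exact not_finite (ZMod 0)
  · have := h.1.2 0
    rw [Subsingleton.elim ((0 : ZMod 1) + 1) 0] at this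
    exact D.arc_irrefl _ this

lemma IsHamCycle.eq_of_cast {α : Type} [DecidableEq α] {D : FinDigraph α} {l : ℕ} {c : ZMod l → α}
    (h : D.IsHamCycle c) (a b : ℤ) (h1 : a - b < l) (h2 : b - a < l)
    (hab : c (a : ZMod l) = c (b : ZMod l)) : a = b := by
  have := (ZMod.intCast_eq_intCast_iff_dvd_sub a b l).1 (h.1.1 hab)
  have h0 := Int.eq_zero_of_abs_lt_dvd this (abs_lt.2 ⟨by omega, by omega⟩)
  omega

/-- A vertex set that no arc leaves contains everything reachable from it. -/
lemma reach_closed {α : Type} {R : α → α → Prop} {S : α → Prop}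
    (hS : ∀ u v, S u → R u v → S v) {u v : α} (h : Relation.ReflTransGen R u v) (hu : S u) :
    S v := by
  induction h with
  | refl => exact hu
  | tail _ hbc ih => exact hS _ _ ih hbc

theorem stmt_6 {α : Type} [DecidableEq α]
    (D1 D2 D : FinDigraph α) {n m : ℕ} (d : ℕ)
    (x : ZMod n → α) (y : ZMod m → α)
    (hx : D1.IsHamCycle x) (hy : D2.IsHamCycle y)
    (hd : d = Nat.gcd n m)
    (hdisj : Disjoint D1.verts D2.verts)
    (hD : GenSum2 D1 D2 D) (hstrong : D.Strong) :
    ∀ i : ℕ, 1 ≤ i → i ≤ m / d → D.HasCycle (n + i * d) := by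
  intro i hi1 hi2
  obtain ⟨hV, hA1, hA2, hxor⟩ := hD
  have hmx := IsHamCycle.mem hx
  have hmy := IsHamCycle.mem hy
  have hn := IsHamCycle.two_le hx
  have hm := IsHamCycle.two_le hy
  have hd0 : 0 < d := hd ▸ Nat.gcd_pos_of_pos_left _ (by omega)
  have P : CyclePair D n m (fun a : ℤ => x (a : ZMod n)) (fun a : ℤ => y (a : ZMod m)) := by
    refine ⟨hn, hm, ?_, ?_, IsHamCycle.eq_of_cast hx, IsHamCycle.eq_of_cast hy, ?_, ?_, ?_, ?_⟩
    · intro a; simp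
    · intro a; simp
    · intro a b hab
      exact Finset.disjoint_left.1 hdisj (hmx a) (by rw [show x a = y b from hab]; exact hmy b)
    · intro a
      have := (hA1 _ _ (hmx a) (hmx (a + 1))).2 (hx.1.2 a)
      simpa using this
    · intro a
      have := (hA2 _ _ (hmy a) (hmy (a + 1))).2 (hy.1.2 a)
      simpa using this
    · intro a b hab
      rcases hxor _ _ (hmx a) (hmy b) with h | h
      · exact absurd h.1 hab
      · exact h.1
  have hx0 : x 0 ∈ D.verts := by rw [hV]; exact Finset.mem_union_left _ (hmx 0)
  have hy0 : y 0 ∈ D.verts := by rw [hV]; exact Finset.mem_union_right _ (hmy 0)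
  refine P.hasCycle (Nat.mul_pos hi1 hd0) ?_ (hd ▸ Dvd.intro_left i rfl) ?_ ?_
  · exact (Nat.mul_le_mul_right d hi2).trans (Nat.div_mul_le_self m d)
  · by_contra hcon
    push Not at hcon
    refine Finset.disjoint_left.1 hdisj (reach_closed (S := (· ∈ D1.verts)) ?_
      (hstrong _ hx0 _ hy0) (hmx 0)) (hmy 0)
    intro u v hu huv
    have hv := D.arc_mem_right huv
    rw [hV] at hv
    rcases Finset.mem_union.1 hv with hv | hv
    · exact hv
    · obtain ⟨a, rfl⟩ := hx.2 u hu
      obtain ⟨b, rfl⟩ := hy.2 v hv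
      obtain ⟨a, rfl⟩ := ZMod.intCast_surjective a
      obtain ⟨b, rfl⟩ := ZMod.intCast_surjective b
      exact absurd huv (hcon a b)
  · by_contra hcon
    push Not at hcon
    refine Finset.disjoint_left.1 hdisj (hmx 0) (reach_closed (S := (· ∈ D2.verts)) ?_
      (hstrong _ hy0 _ hx0) (hmy 0))
    intro u v hu huv
    have hv := D.arc_mem_right huv
    rw [hV] at hv
    rcases Finset.mem_union.1 hv with hv | hv
    · obtain ⟨a, rfl⟩ := hx.2 v hv
      obtain ⟨b, rfl⟩ := hy.2 u hu
      obtain ⟨a, rfl⟩ := ZMod.intCast_surjective a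
      obtain ⟨b, rfl⟩ := ZMod.intCast_surjective b
      rcases hxor _ _ (hmx a) (hmy b) with h | h
      · exact absurd huv h.2
      · exact absurd (hcon a b) h.2
    · exact hv
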